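/- arXiv:1603.00742 — 2 statements merged into one kernel-verified Lean document; each statement's English description precedes it below -/
import Mathlib

section
/- Let l >= 1 and write tau_l(lambda, 0) = (mu, s) for a partition lambda, where (mu, s) is the unique pair with beta_0(lambda) = ⊔_{p=1}^{l} (p - l + l*beta_{s_p}(mu^p)). Then lambda is an l-core (i.e. (lambda,0) has no l-hook) if and only if all components mu^1, ..., mu^l are empty. Consequently, the map lambda ↦ s restricts to a bijection from the set of l-cores onto {s ∈ Z^l : s_1 + ... + s_l = 0}. -/
/-!
Split a beta-set into the `l` runners of the abacus: every integer is uniquely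
`runner l p b = p + 1 - l + l * b`, and `TauDecomp` says that the trace of `β_d(λ)` on runner `p`
is `β_{s_p}(μ^p)` (`tauDecomp_iff`). Moving by `l` in `ℤ` is moving by `1` on a runner, so an
`l`-hook of `λ` is a `1`-hook of some `μ^p`, and a partition without `1`-hooks is empty
(`eq_zero_iff_no_one_hook`).

For a core every runner is therefore a half-line `b ≤ s p`. The charge of a beta-set is read off
by counting its elements above a very negative bound; taking this bound to be a multiple of `l`
and counting runner by runner shows that the charge is `∑ p, s p` (`charge_eq_sum`), whence the
sum is `0`. Conversely, given `s` with sum `0`, the union of the half-lines is bounded above and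
contains all very negative integers, so it is the beta-set of some charged partition
(`exists_betaSet_eq`), whose charge is `0` by the same count. Uniqueness holds because a
partition is determined by its beta-set (`betaSet_injective`).
-/

/-- A partition, encoded as an antitone, eventually-zero sequence of naturals;
`f i` is the part `λ_{i+1}` (so indexing is shifted by one). -/
def IsPartition (f : ℕ → ℕ) : Prop :=
  Antitone f ∧ ∃ N, ∀ i, N ≤ i → f i = 0

/-- The beta-set `β_d(λ) = {λ_u + d + 1 - u : u ≥ 1}` of the charged partition `(λ, d)`
(with `u = i + 1`). -/
def betaSet (f : ℕ → ℕ) (d : ℤ) : Set ℤ :=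
  {x | ∃ i : ℕ, x = (f i : ℤ) + d - i}

/-- The size `|λ| = ∑ λ_u`. -/
noncomputable def psize (f : ℕ → ℕ) : ℕ := ∑' i, f i

/-- Lusztig's `a`-function, `a(λ) = ∑_{u ≥ 1} (u - 1) λ_u`. -/
noncomputable def aFun (f : ℕ → ℕ) : ℕ := ∑' i, i * f i

/-- The type of partitions. -/
abbrev PartitionT := {f : ℕ → ℕ // IsPartition f}

/-- `AddHook e lam nu d x` : the charged partition `(nu, d)` is obtained from `(lam, d)`
by adding the `e`-hook `(x, x + e)`. -/
def AddHook (e : ℤ) (lam nu : ℕ → ℕ) (d : ℤ) (x : ℤ) : Prop :=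
  x ∈ betaSet lam d ∧ x + e ∉ betaSet lam d ∧
    betaSet nu d = (betaSet lam d \ {x}) ∪ {x + e}

/-- `TauDecomp l lam d mu s` : `β_d(lam) = ⊔_{p=1}^{l} (p - l + l·β_{s_p}(mu^p))`
(the union is automatically disjoint since the pieces lie in distinct residue classes
mod `l`). -/
def TauDecomp (l : ℕ) (lam : ℕ → ℕ) (d : ℤ) (mu : Fin l → (ℕ → ℕ)) (s : Fin l → ℤ) : Prop :=
  betaSet lam d =
    ⋃ p : Fin l, (fun b => ((p : ℕ) : ℤ) + 1 - (l : ℤ) + (l : ℤ) * b) '' betaSet (mu p) (s p)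

/-- `lam` is an `e`-core: `(lam, 0)` has no `e`-hook. -/
def IsECore (e : ℕ) (f : ℕ → ℕ) : Prop :=
  ¬ ∃ x : ℤ, x + (e : ℤ) ∈ betaSet f 0 ∧ x ∉ betaSet f 0

/-! ### Runners of the abacus -/

/-- The integer on the `p`-th runner of the `l`-abacus at height `b`. -/
def runner (l : ℕ) (p : Fin l) (b : ℤ) : ℤ := ((p : ℕ) : ℤ) + 1 - (l : ℤ) + (l : ℤ) * b

lemma runner_inj {l : ℕ} {p q : Fin l} {b c : ℤ} (h : runner l p b = runner l q c) :
    p = q ∧ b = c := by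
  unfold runner at h
  have hp := p.isLt
  have hq := q.isLt
  have hbc : b = c := by
    rcases lt_trichotomy b c with h1 | h1 | h1
    · have : (l : ℤ) * (b + 1) ≤ l * c := by gcongr; omega
      rw [mul_add] at this
      omega
    · exact h1
    · have : (l : ℤ) * (c + 1) ≤ l * b := by gcongr; omega
      rw [mul_add] at this
      omega
  subst hbc
  exact ⟨Fin.ext (by omega), rfl⟩

lemma runner_surj {l : ℕ} (hl : 1 ≤ l) (x : ℤ) : ∃ p b, runner l p b = x := by
  have h1 := Int.emod_nonneg (x - 1) (b := (l : ℤ)) (by omega)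
  have h2 := Int.emod_lt_of_pos (x - 1) (b := (l : ℤ)) (by omega)
  have h3 := Int.emod_add_mul_ediv (x - 1) (l : ℤ)
  refine ⟨⟨((x - 1) % l).toNat, by omega⟩, (x - 1) / l + 1, ?_⟩
  simp only [runner, mul_add]
  rw [Int.toNat_of_nonneg h1]
  omega

lemma runner_succ {l : ℕ} (p : Fin l) (b : ℤ) : runner l p (b + 1) = runner l p b + l := by
  simp only [runner]; ring

lemma tauDecomp_iff {l : ℕ} (hl : 1 ≤ l) (lam : ℕ → ℕ) (d : ℤ) (mu : Fin l → (ℕ → ℕ))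
    (s : Fin l → ℤ) : TauDecomp l lam d mu s ↔
      ∀ p b, runner l p b ∈ betaSet lam d ↔ b ∈ betaSet (mu p) (s p) := by
  have key : ∀ p b, runner l p b ∈ (⋃ p : Fin l,
      (fun b => ((p : ℕ) : ℤ) + 1 - (l : ℤ) + (l : ℤ) * b) '' betaSet (mu p) (s p)) ↔
        b ∈ betaSet (mu p) (s p) := by
    intro p b
    simp only [Set.mem_iUnion, Set.mem_image]
    constructor
    · rintro ⟨q, c, hc, h⟩
      obtain ⟨rfl, rfl⟩ := runner_inj (p := q) (b := c) h
      exact hc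
    · exact fun h => ⟨p, b, h, rfl⟩
  unfold TauDecomp
  constructor
  · intro h p b
    rw [h, key]
  · intro h
    ext x
    obtain ⟨p, b, rfl⟩ := runner_surj hl x
    rw [h, key]

/-! ### Hooks and cores -/

lemma betaSet_zero (d : ℤ) : betaSet (fun _ => 0) d = Set.Iic d := by
  ext x
  simp only [betaSet, Set.mem_ofPred_eq, Set.mem_Iic]
  constructor
  · rintro ⟨i, rfl⟩
    simp
  · intro h
    exact ⟨(d - x).toNat, by push_cast; omega⟩

lemma beta_strictAnti {f : ℕ → ℕ} (hf : Antitone f) (d : ℤ) :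
    StrictAnti (fun i : ℕ => (f i : ℤ) + d - i) := by
  intro i j hij
  have := hf hij.le
  simp only
  omega

/-- The empty partition is the only one without a `1`-hook: without one, consecutive
elements of the beta-set differ by one, so the parts are constant. -/
lemma eq_zero_iff_no_one_hook {f : ℕ → ℕ} (hf : IsPartition f) (d : ℤ) :
    (∀ i, f i = 0) ↔ ∀ b, b + 1 ∈ betaSet f d → b ∈ betaSet f d := by
  constructor
  · intro h b
    obtain rfl : f = fun _ => 0 := funext h
    simp only [betaSet_zero, Set.mem_Iic]
    omega
  · intro h
    have hs := beta_strictAnti hf.1 d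
    have hstep : ∀ i, f (i + 1) = f i := by
      intro i
      obtain ⟨j, hj⟩ := h ((f i : ℤ) + d - i - 1) ⟨i, by ring⟩
      have hij : i < j := hs.lt_iff_gt.1 (by omega)
      have h1 := hs.antitone (Nat.succ_le_of_lt hij)
      have h2 := hf.1 (Nat.le_succ i)
      simp only [Nat.succ_eq_add_one] at h1 h2
      push_cast at h1
      omega
    have hconst : ∀ i, f i = f 0 := by
      intro i
      induction i with
      | zero => rfl
      | succ k ih => rw [hstep, ih]
    obtain ⟨N, hN⟩ := hf.2
    intro i
    rw [hconst i, ← hconst N, hN N le_rfl]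

lemma isECore_iff {l : ℕ} (hl : 1 ≤ l) (lam : ℕ → ℕ) : IsECore l lam ↔
    ∀ (p : Fin l) (b : ℤ), runner l p (b + 1) ∈ betaSet lam 0 → runner l p b ∈ betaSet lam 0 := by
  unfold IsECore
  push Not
  constructor
  · intro h p b hb
    exact h _ (by rwa [runner_succ] at hb)
  · intro h x hx
    obtain ⟨p, b, rfl⟩ := runner_surj hl x
    exact h p b (by rwa [runner_succ])

lemma isECore_iff_of_tauDecomp {l : ℕ} (hl : 1 ≤ l) {lam : ℕ → ℕ} {mu : Fin l → (ℕ → ℕ)}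
    {s : Fin l → ℤ} (hmu : ∀ p, IsPartition (mu p)) (h : TauDecomp l lam 0 mu s) :
    IsECore l lam ↔ ∀ p i, mu p i = 0 := by
  rw [tauDecomp_iff hl] at h
  rw [isECore_iff hl]
  simp only [h]
  exact forall_congr' fun p => (eq_zero_iff_no_one_hook (hmu p) (s p)).symm

/-! ### Counting the charge -/

/-- The charge `d` is recovered from the beta-set by counting its elements above a sufficiently
negative bound. -/
lemma ncard_betaSet {f : ℕ → ℕ} (hf : IsPartition f) (d : ℤ) :
    ∃ N : ℕ, ∀ K : ℕ, N ≤ K → ((betaSet f d ∩ Set.Ioi (-(K : ℤ))).ncard : ℤ) = K + d := by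
  obtain ⟨N, hN⟩ := hf.2
  refine ⟨N + d.natAbs, fun K hK => ?_⟩
  have hs := beta_strictAnti hf.1 d
  have : betaSet f d ∩ Set.Ioi (-(K : ℤ)) =
      (fun i : ℕ => (f i : ℤ) + d - i) '' (Finset.range (K + d).toNat : Set ℕ) := by
    ext x
    simp only [betaSet, Set.mem_inter_iff, Set.mem_ofPred_eq, Set.mem_Ioi, Set.mem_image,
      Finset.coe_range, Set.mem_Iio]
    constructor
    · rintro ⟨⟨i, rfl⟩, hx⟩
      refine ⟨i, ?_, rfl⟩
      by_contra hi
      have := hN i (by omega)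
      omega
    · rintro ⟨i, hi, rfl⟩
      exact ⟨⟨i, rfl⟩, by omega⟩
  rw [this, Set.ncard_image_of_injective _ hs.injective, Set.ncard_coe_finset, Finset.card_range]
  omega

/-- If every runner of `(f, d)` is the full half-line below `s p`, then the charges of the
runners add up to `d`. -/
lemma charge_eq_sum {l : ℕ} (hl : 1 ≤ l) {f : ℕ → ℕ} (hf : IsPartition f) {d : ℤ}
    {s : Fin l → ℤ} (h : ∀ p b, runner l p b ∈ betaSet f d ↔ b ≤ s p) : ∑ p, s p = d := by
  obtain ⟨N, hN⟩ := ncard_betaSet hf d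
  set M : ℕ := N + ∑ p, (s p).natAbs with hM
  have hMs : ∀ p, -(M : ℤ) ≤ s p := by
    intro p
    have := Finset.single_le_sum (f := fun p => (s p).natAbs) (fun _ _ => Nat.zero_le _)
      (Finset.mem_univ p)
    omega
  have hNM : N ≤ l * M := (show N ≤ M by omega).trans (Nat.le_mul_of_pos_left M hl)
  have hcount := hN (l * M) hNM
  -- The bound `-l * M` cuts every runner exactly at height `-M`.
  have hset : betaSet f d ∩ Set.Ioi (-((l * M : ℕ) : ℤ)) =
      (fun a : (_ : Fin l) × ℤ => runner l a.1 a.2) ''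
        (Finset.univ.sigma fun p => Finset.Ioc (-(M : ℤ)) (s p) : Finset _) := by
    have hcut : ∀ p b, -((l * M : ℕ) : ℤ) < runner l p b ↔ -(M : ℤ) < b := by
      intro p b
      have hp := p.isLt
      unfold runner
      push_cast
      constructor
      · intro hx
        by_contra hb
        have : (l : ℤ) * b ≤ l * (-M) := by gcongr; omega
        rw [mul_neg] at this
        omega
      · intro hb
        have : (l : ℤ) * (-M + 1) ≤ l * b := by gcongr; omega
        rw [mul_add, mul_neg] at this
        omega
    ext x
    obtain ⟨p, b, rfl⟩ := runner_surj hl x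
    simp only [Set.mem_inter_iff, Set.mem_Ioi, hcut, h, Set.mem_image, Finset.mem_coe,
      Finset.mem_sigma, Finset.mem_univ, true_and, Finset.mem_Ioc]
    constructor
    · rintro ⟨h1, h2⟩
      exact ⟨⟨p, b⟩, ⟨h2, h1⟩, rfl⟩
    · rintro ⟨⟨q, c⟩, hc, hx⟩
      obtain ⟨rfl, rfl⟩ := runner_inj hx
      exact ⟨hc.2, hc.1⟩
  have hinj : Function.Injective (fun a : (_ : Fin l) × ℤ => runner l a.1 a.2) := by
    rintro ⟨p, b⟩ ⟨q, c⟩ hx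
    obtain ⟨rfl, rfl⟩ := runner_inj hx
    rfl
  rw [hset, Set.ncard_image_of_injective _ hinj, Set.ncard_coe_finset, Finset.card_sigma] at hcount
  push_cast [Int.card_Ioc] at hcount
  have hterm : ∀ p, ((s p - -(M : ℤ)).toNat : ℤ) = s p + M := by
    intro p
    have := hMs p
    omega
  simp only [hterm, Finset.sum_add_distrib, Finset.sum_const, Finset.card_univ,
    Fintype.card_fin, nsmul_eq_mul] at hcount
  linarith

/-! ### Reconstructing a partition from its beta-set -/

/-- A set of integers that is bounded above and contains all sufficiently negative integers is
the beta-set of a charged partition: list it decreasingly as `x 0 > x 1 > ⋯`; then `x i + i` is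
antitone and eventually equal to the charge. -/
lemma exists_betaSet_eq {B : Set ℤ} {M K : ℤ} (hM : ∀ x ∈ B, x ≤ M) (hK : ∀ x ≤ K, x ∈ B) :
    ∃ f d, IsPartition f ∧ betaSet f d = B := by
  classical
  set P : ℕ → Prop := fun n => M - (n : ℤ) ∈ B with hP
  have hinf : (Set.ofPred P).Infinite := by
    refine Set.infinite_of_not_bddAbove ?_
    rintro ⟨b, hb⟩
    have h1 : P (b + 1 + (M - K).toNat) := hK _ (by push_cast; omega)
    have := hb h1
    omega
  have hmono := Nat.nth_strictMono hinf
  have hmem : ∀ i, P (Nat.nth P i) := Nat.nth_mem_of_infinite hinf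
  have hrange : Set.range (Nat.nth P) = Set.ofPred P := Nat.range_nth_of_infinite hinf
  set I := (M - K).toNat with hI
  have hstep : ∀ i, I ≤ i → Nat.nth P (i + 1) = Nat.nth P i + 1 := by
    intro i hi
    have h1 : i ≤ Nat.nth P i := hmono.le_apply
    have h2 : P (Nat.nth P i + 1) := hK _ (by push_cast; omega)
    obtain ⟨j, hj⟩ : Nat.nth P i + 1 ∈ Set.range (Nat.nth P) := by rw [hrange]; exact h2
    have hij : i < j := hmono.lt_iff_lt.1 (by omega)
    have h3 := hmono.monotone (Nat.succ_le_of_lt hij)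
    have h4 := hmono (Nat.lt_succ_self i)
    simp only [Nat.succ_eq_add_one] at h3 h4
    omega
  set g : ℕ → ℤ := fun i => M - (Nat.nth P i : ℤ) + i with hg
  have hganti : Antitone g := by
    refine antitone_nat_of_succ_le fun i => ?_
    have := hmono (Nat.lt_succ_self i)
    simp only [hg, Nat.succ_eq_add_one] at this ⊢
    push_cast
    omega
  have hgconst : ∀ i, I ≤ i → g i = g I := by
    intro i hi
    induction i, hi using Nat.le_induction with
    | base => rfl
    | succ k hk ih =>
      rw [← ih]
      simp only [hg, hstep k hk]
      push_cast
      ring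
  have hge : ∀ i, g I ≤ g i := by
    intro i
    rcases le_total i I with h | h
    · exact hganti h
    · exact (hgconst i h).ge
  refine ⟨fun i => (g i - g I).toNat, g I, ⟨fun i j hij => ?_, I, fun i hi => ?_⟩, ?_⟩
  · have := hganti hij
    simp only
    omega
  · simp [hgconst i hi]
  · have hval : ∀ i : ℕ, (((g i - g I).toNat : ℕ) : ℤ) + g I - i = M - (Nat.nth P i : ℤ) := by
      intro i
      have h1 := hge i
      have h2 : g i = M - (Nat.nth P i : ℤ) + i := rfl
      omega
    ext x
    simp only [betaSet, Set.mem_ofPred_eq, hval]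
    constructor
    · rintro ⟨i, rfl⟩
      exact hmem i
    · intro hx
      have hxM := hM x hx
      have h1 : P (M - x).toNat := by
        have : M - ((M - x).toNat : ℤ) = x := by omega
        simpa only [hP, this] using hx
      obtain ⟨i, hi⟩ : (M - x).toNat ∈ Set.range (Nat.nth P) := by rw [hrange]; exact h1
      exact ⟨i, by omega⟩

lemma betaSet_injective {f g : ℕ → ℕ} (hf : Antitone f) (hg : Antitone g) {d : ℤ}
    (h : betaSet f d = betaSet g d) : f = g := by
  have key : (fun i : ℕ => -((f i : ℤ) + d - i)) = fun i : ℕ => -((g i : ℤ) + d - i) := by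
    refine (StrictMono.range_inj (beta_strictAnti hf d).neg (beta_strictAnti hg d).neg).1 ?_
    ext x
    have := Set.ext_iff.1 h (-x)
    simp only [betaSet, Set.mem_ofPred_eq] at this
    simp only [Set.mem_range, neg_eq_iff_eq_neg]
    simpa only [eq_comm] using this
  ext i
  have := congrFun key i
  omega

/-! ### Cores and half-lines -/

lemma mem_betaSet_of_le {f : ℕ → ℕ} (hf : IsPartition f) (d : ℤ) :
    ∃ K : ℤ, ∀ x ≤ K, x ∈ betaSet f d := by
  obtain ⟨N, hN⟩ := hf.2
  refine ⟨d - N, fun x hx => ⟨(d - x).toNat, ?_⟩⟩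
  rw [hN _ (by omega)]
  push_cast
  omega

lemma le_of_mem_betaSet {f : ℕ → ℕ} (hf : Antitone f) {d x : ℤ} (hx : x ∈ betaSet f d) :
    x ≤ f 0 + d := by
  obtain ⟨i, rfl⟩ := hx
  have := hf (Nat.zero_le i)
  omega

/-- A downward closed set of integers that is bounded above and nonempty is a half-line. -/
lemma exists_eq_Iic {A : ℤ → Prop} (hdown : ∀ b, A (b + 1) → A b) {a M : ℤ} (ha : A a)
    (hM : ∀ b, A b → b ≤ M) : ∃ s, ∀ b, A b ↔ b ≤ s := by
  obtain ⟨s, hs, hmax⟩ := Int.exists_greatest_of_bdd ⟨M, hM⟩ ⟨a, ha⟩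
  refine ⟨s, fun b => ⟨hmax b, fun hb => ?_⟩⟩
  induction b, hb using Int.leInductionDown with
  | base => exact hs
  | pred n hn ih => exact hdown _ (by simpa using ih)

lemma exists_charges {l : ℕ} (hl : 1 ≤ l) {lam : ℕ → ℕ} (hlam : IsPartition lam)
    (hcore : IsECore l lam) :
    ∃ s : Fin l → ℤ, ∀ p b, runner l p b ∈ betaSet lam 0 ↔ b ≤ s p := by
  rw [isECore_iff hl] at hcore
  obtain ⟨K, hK⟩ := mem_betaSet_of_le hlam 0
  have : ∀ p : Fin l, ∃ s : ℤ, ∀ b, runner l p b ∈ betaSet lam 0 ↔ b ≤ s := by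
    intro p
    have hp := p.isLt
    refine exists_eq_Iic (A := fun b => runner l p b ∈ betaSet lam 0) (hcore p)
      (a := -|K|) (M := lam 0 + 1) (hK _ ?_) fun b hb => ?_
    · have h1 : (1 : ℤ) * |K| ≤ l * |K| := by gcongr; omega
      have h2 := neg_abs_le K
      simp only [runner, mul_neg]
      omega
    · have h1 := le_of_mem_betaSet hlam.1 hb
      by_contra hlt
      have h2 : (l : ℤ) * (lam 0 + 2) ≤ l * b := by gcongr; omega
      have h3 : (1 : ℤ) * lam 0 ≤ l * lam 0 := by gcongr; omega
      simp only [runner] at h1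
      rw [mul_add] at h2
      omega
  choose s hs using this
  exact ⟨s, hs⟩

lemma exists_core {l : ℕ} (hl : 1 ≤ l) {s : Fin l → ℤ} (hs : ∑ p, s p = 0) :
    ∃ f, IsPartition f ∧ ∀ p b, runner l p b ∈ betaSet f 0 ↔ b ≤ s p := by
  set B : Set ℤ := {x | ∃ p b, runner l p b = x ∧ b ≤ s p} with hB
  have hmem : ∀ p b, runner l p b ∈ B ↔ b ≤ s p := by
    intro p b
    constructor
    · rintro ⟨q, c, hx, hc⟩
      obtain ⟨rfl, rfl⟩ := runner_inj hx
      exact hc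
    · exact fun h => ⟨p, b, rfl, h⟩
  set S : ℕ := ∑ p, (s p).natAbs with hS
  have hbound : ∀ p, (s p).natAbs ≤ S := fun p =>
    Finset.single_le_sum (f := fun p => (s p).natAbs) (fun _ _ => Nat.zero_le _)
      (Finset.mem_univ p)
  have hupper : ∀ x ∈ B, x ≤ (l : ℤ) * S := by
    rintro x ⟨p, b, rfl, hb⟩
    have hp := p.isLt
    have h1 := hbound p
    have h2 : (l : ℤ) * b ≤ l * S := by gcongr; omega
    simp only [runner]
    omega
  have hlower : ∀ x ≤ -((l : ℤ) * (S + 1)), x ∈ B := by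
    intro x hx
    obtain ⟨p, b, rfl⟩ := runner_surj hl x
    have hp := p.isLt
    have h1 := hbound p
    rw [hmem]
    by_contra hb
    have h2 : (l : ℤ) * (-S) ≤ l * b := by gcongr; omega
    simp only [runner] at hx
    rw [mul_neg] at h2
    rw [mul_add] at hx
    omega
  obtain ⟨f, d, hf, hfB⟩ := exists_betaSet_eq hupper hlower
  have hrun : ∀ p b, runner l p b ∈ betaSet f d ↔ b ≤ s p := by rwa [hfB]
  obtain rfl : d = 0 := by rw [← charge_eq_sum hl hf hrun, hs]
  exact ⟨f, hf, hrun⟩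

/-- writing `τ_l(λ, 0) = (μ, s)`, the partition `λ` is an `l`-core iff
all components of `μ` are empty; consequently `λ ↦ s` restricts to a bijection from
the set of `l`-cores onto `{s ∈ ℤ^l : s_1 + ⋯ + s_l = 0}`. -/
theorem statement15 (l : ℕ) (hl : 1 ≤ l) :
    (∀ (lam : ℕ → ℕ) (mu : Fin l → (ℕ → ℕ)) (s : Fin l → ℤ),
      IsPartition lam → (∀ p, IsPartition (mu p)) → TauDecomp l lam 0 mu s →
      (IsECore l lam ↔ ∀ p i, mu p i = 0)) ∧
    (∀ lam : ℕ → ℕ, IsPartition lam → IsECore l lam →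
      ∃ s : Fin l → ℤ, ∑ p, s p = 0 ∧ TauDecomp l lam 0 (fun _ _ => 0) s) ∧
    (∀ s : Fin l → ℤ, ∑ p, s p = 0 →
      ∃! lam : PartitionT, IsECore l lam.1 ∧ TauDecomp l lam.1 0 (fun _ _ => 0) s) := by
  have hempty : ∀ lam s, TauDecomp l lam 0 (fun _ _ => 0) s ↔
      ∀ p b, runner l p b ∈ betaSet lam 0 ↔ b ≤ s p := by
    intro lam s
    simp only [tauDecomp_iff hl, betaSet_zero, Set.mem_Iic]
  have hzero : ∀ _ : Fin l, IsPartition (fun _ => 0) :=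
    fun _ => ⟨antitone_const, 0, fun _ _ => rfl⟩
  refine ⟨fun lam mu s _ hmu h => isECore_iff_of_tauDecomp hl hmu h, ?_, ?_⟩
  · intro lam hlam hcore
    obtain ⟨s, hs⟩ := exists_charges hl hlam hcore
    exact ⟨s, charge_eq_sum hl hlam hs, (hempty lam s).2 hs⟩
  · intro s hs
    obtain ⟨f, hf, hfs⟩ := exists_core hl hs
    have hdec := (hempty f s).2 hfs
    refine ⟨⟨f, hf⟩, ⟨(isECore_iff_of_tauDecomp hl hzero hdec).2 fun _ _ => rfl, hdec⟩, ?_⟩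
    rintro ⟨g, hg⟩ ⟨-, hgdec⟩
    exact Subtype.ext (betaSet_injective hg.1 hf.1 (Eq.trans hgdec hdec.symm))
end

section
/- Let d >= 1, mu a partition and s ∈ Z. Suppose x ∉ beta_s(mu) and x + d ∈ beta_s(mu), and let mu' be the partition with beta_s(mu') = (beta_s(mu) ∖ {x+d}) ∪ {x} (removal of a d-hook). Then |mu'| = |mu| - d, and for every residue c modulo d, #{(a,b) ∈ Y(mu) : s + b - a ≡ c (mod d)} = #{(a,b) ∈ Y(mu') : s + b - a ≡ c (mod d)} + 1; that is, removing a d-hook removes exactly one box from each residue class of s-shifted contents modulo d. -/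
/-- The beta-numbers of the first `N` rows. -/
def betaFin (f : ℕ → ℕ) (s : ℤ) (N : ℕ) : Finset ℤ :=
  (Finset.range N).image (fun i : ℕ => (f i : ℤ) + s - i)

theorem mem_betaFin {f : ℕ → ℕ} {N : ℕ} (hN : ∀ i, N ≤ i → f i = 0) (s y : ℤ) :
    y ∈ betaFin f s N ↔ y ∈ betaSet f s ∧ s - N < y := by
  simp only [betaFin, betaSet, Finset.mem_image, Finset.mem_range, Set.mem_ofPred_eq]
  constructor
  · rintro ⟨i, hi, rfl⟩
    exact ⟨⟨i, rfl⟩, by omega⟩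
  · rintro ⟨⟨i, rfl⟩, h⟩
    refine ⟨i, ?_, rfl⟩
    by_contra hi
    have := hN i (by omega)
    omega

theorem sum_betaFin {f : ℕ → ℕ} (hf : Antitone f) (s : ℤ) (N : ℕ) (G : ℤ → ℤ) :
    ∑ y ∈ betaFin f s N, G y = ∑ i ∈ Finset.range N, G ((f i : ℤ) + s - i) := by
  unfold betaFin
  refine Finset.sum_image ?_
  intro i _ j _ h
  simp only at h
  rcases lt_trichotomy i j with hij | hij | hij
  · have := hf hij.le
    omega
  · exact hij
  · have := hf hij.le
    omega

/-- Removing the hook `(x, x + d)` replaces the term `G (x + d)` by `G x` in any sum over the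
first `N` beta-numbers. -/
theorem sum_beta_hook {d : ℕ} (hd : 1 ≤ d) {mu mu' : ℕ → ℕ} (hmu : Antitone mu)
    (hmu' : Antitone mu') {s x : ℤ} (hx : x ∉ betaSet mu s) (hxd : x + (d : ℤ) ∈ betaSet mu s)
    (hb : betaSet mu' s = (betaSet mu s \ {x + (d : ℤ)}) ∪ {x})
    {N : ℕ} (hN : ∀ i, N ≤ i → mu i = 0) (hN' : ∀ i, N ≤ i → mu' i = 0) (G : ℤ → ℤ) :
    ∑ i ∈ Finset.range N, G ((mu i : ℤ) + s - i) =
      ∑ i ∈ Finset.range N, G ((mu' i : ℤ) + s - i) + (G (x + d) - G x) := by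
  rw [← sum_betaFin hmu, ← sum_betaFin hmu']
  -- Every integer at most `s - N` is the beta-number of an empty row of `mu`.
  have hxN : s - N < x := by
    by_contra h
    refine hx ⟨(s - x).toNat, ?_⟩
    rw [hN _ (by omega)]
    push_cast
    omega
  have hmem : x + (d : ℤ) ∈ betaFin mu s N := (mem_betaFin hN s _).2 ⟨hxd, by omega⟩
  have hnot : x ∉ (betaFin mu s N).erase (x + d) := fun h =>
    hx ((mem_betaFin hN s _).1 (Finset.mem_of_mem_erase h)).1
  have heq : betaFin mu' s N = insert x ((betaFin mu s N).erase (x + d)) := by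
    ext y
    rw [mem_betaFin hN', hb, Finset.mem_insert, Finset.mem_erase, mem_betaFin hN]
    simp only [Set.mem_union, Set.mem_sdiff, Set.mem_singleton_iff]
    constructor
    · rintro ⟨⟨h1, h2⟩ | h, h3⟩
      · exact Or.inr ⟨h2, h1, h3⟩
      · exact Or.inl h
    · rintro (rfl | ⟨h1, h2, h3⟩)
      · exact ⟨Or.inr rfl, hxN⟩
      · exact ⟨Or.inl ⟨h2, h1⟩, h3⟩
  rw [heq, Finset.sum_insert hnot, ← Finset.add_sum_erase _ _ hmem]
  ring

theorem psize_eq {f : ℕ → ℕ} {N : ℕ} (hN : ∀ i, N ≤ i → f i = 0) :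
    psize f = ∑ i ∈ Finset.range N, f i :=
  tsum_eq_sum fun i hi => hN i (by simpa using hi)

/-- With `z = y - c`: the increments of `y ↦ ⌊(y - c - 1) / d⌋` form the indicator of the class
of `c` modulo `d`. -/
theorem ediv_step {d : ℕ} (hd : 1 ≤ d) (z : ℤ) :
    z / (d : ℤ) = (z - 1) / (d : ℤ) + if (d : ℤ) ∣ z then 1 else 0 := by
  have hd0 : (0 : ℤ) < d := by omega
  have h1 := Int.mul_ediv_add_emod z d
  have h2 := Int.emod_nonneg z hd0.ne'
  have h3 := Int.emod_lt_of_pos z hd0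
  split_ifs with h
  · have h0 := Int.emod_eq_zero_of_dvd h
    have : (z - 1) / (d : ℤ) = z / d - 1 := by
      rw [Int.ediv_eq_iff_of_pos hd0]
      constructor <;> nlinarith
    omega
  · have h0 : z % (d : ℤ) ≠ 0 := fun h' => h (Int.dvd_of_emod_eq_zero h')
    have h4 : 1 ≤ z % (d : ℤ) := by omega
    have : (z - 1) / (d : ℤ) = z / d := by
      rw [Int.ediv_eq_iff_of_pos hd0]
      constructor <;> nlinarith
    omega

/-- Telescoping count of the integers of residue `c` in an interval of length `n`. -/
theorem card_row {d : ℕ} (hd : 1 ≤ d) (t c : ℤ) (n : ℕ) :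
    (((Finset.range n).filter (fun b : ℕ => (d : ℤ) ∣ (t + b - c))).card : ℤ) =
      (n + t - c - 1) / (d : ℤ) - (t - c - 1) / (d : ℤ) := by
  induction n with
  | zero => simp
  | succ n ih =>
    have h := ediv_step hd (t + n - c)
    have e1 : ((n + 1 : ℕ) : ℤ) + t - c - 1 = t + n - c := by push_cast; ring
    have e2 : (n : ℤ) + t - c - 1 = t + n - c - 1 := by ring
    rw [e2] at ih
    rw [e1, Finset.range_add_one, Finset.filter_insert, h]
    split_ifs with hc
    · rw [Finset.card_insert_of_notMem (by simp)]
      push_cast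
      linarith
    · linarith

/-- Summing `card_row` over the rows counts the boxes of residue `c`; the subtracted sum does not
depend on the partition. -/
theorem ncard_boxes {d : ℕ} (hd : 1 ≤ d) {f : ℕ → ℕ} {N : ℕ} (hN : ∀ i, N ≤ i → f i = 0)
    (s c : ℤ) :
    ({p : ℕ × ℕ | p.2 < f p.1 ∧ (d : ℤ) ∣ (s + (p.2 : ℤ) - (p.1 : ℤ) - c)}.ncard : ℤ) =
      ∑ i ∈ Finset.range N, ((f i : ℤ) + s - i - c - 1) / (d : ℤ) -
        ∑ i ∈ Finset.range N, (s - i - c - 1) / (d : ℤ) := by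
  classical
  set S : Finset (ℕ × ℕ) := (Finset.range N).biUnion fun i =>
    ((Finset.range (f i)).filter (fun b : ℕ => (d : ℤ) ∣ (s - i + b - c))).image (Prod.mk i)
    with hS
  have hset : {p : ℕ × ℕ | p.2 < f p.1 ∧ (d : ℤ) ∣ (s + (p.2 : ℤ) - (p.1 : ℤ) - c)} = ↑S := by
    ext ⟨a, b⟩
    have e : s + (b : ℤ) - a - c = s - a + b - c := by ring
    simp only [hS, Set.mem_ofPred_eq, Finset.coe_biUnion, Set.mem_iUnion, Finset.mem_coe,
      Finset.mem_image, Finset.mem_filter, Finset.mem_range, Prod.mk.injEq, e]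
    constructor
    · rintro ⟨h1, h2⟩
      refine ⟨a, ?_, b, ⟨h1, h2⟩, rfl, rfl⟩
      by_contra h
      have := hN a (by omega)
      omega
    · rintro ⟨i, _, b', h, rfl, rfl⟩
      exact h
  rw [hset, Set.ncard_coe_finset, hS, Finset.card_biUnion, Nat.cast_sum, ← Finset.sum_sub_distrib]
  · refine Finset.sum_congr rfl fun i _ => ?_
    rw [Finset.card_image_of_injective _ (Prod.mk_right_injective i), card_row hd]
    congr 2
    ring
  · intro i _ j _ hij
    rw [Function.onFun, Finset.disjoint_left]
    intro p hp hq
    simp only [Finset.mem_image] at hp hq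
    obtain ⟨_, _, rfl⟩ := hp
    obtain ⟨_, _, h⟩ := hq
    exact hij (congrArg Prod.fst h).symm

/-- removing a `d`-hook removes `d` boxes, exactly one from each residue
class of `s`-shifted contents modulo `d`. Boxes are 0-indexed: `(a, b)` with `b < μ_a`
has `s`-shifted content `s + b - a`. -/
theorem statement17 (d : ℕ) (hd : 1 ≤ d) (mu mu' : ℕ → ℕ)
    (hmu : IsPartition mu) (hmu' : IsPartition mu') (s : ℤ) (x : ℤ)
    (hx : x ∉ betaSet mu s) (hxd : x + (d : ℤ) ∈ betaSet mu s)
    (hb : betaSet mu' s = (betaSet mu s \ {x + (d : ℤ)}) ∪ {x}) :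
    psize mu' + d = psize mu ∧
    ∀ c : ℤ,
      {p : ℕ × ℕ | p.2 < mu p.1 ∧ (d : ℤ) ∣ (s + (p.2 : ℤ) - (p.1 : ℤ) - c)}.ncard =
        {p : ℕ × ℕ | p.2 < mu' p.1 ∧ (d : ℤ) ∣ (s + (p.2 : ℤ) - (p.1 : ℤ) - c)}.ncard + 1 := by
  obtain ⟨ha, N₁, h₁⟩ := hmu
  obtain ⟨ha', N₂, h₂⟩ := hmu'
  have hN : ∀ i, max N₁ N₂ ≤ i → mu i = 0 := fun i hi => h₁ i (le_trans (le_max_left _ _) hi)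
  have hN' : ∀ i, max N₁ N₂ ≤ i → mu' i = 0 := fun i hi => h₂ i (le_trans (le_max_right _ _) hi)
  have key := sum_beta_hook hd ha ha' hx hxd hb hN hN'
  constructor
  · have h := key id
    simp only [id, Finset.sum_sub_distrib, Finset.sum_add_distrib] at h
    rw [psize_eq hN, psize_eq hN']
    zify
    linarith
  · intro c
    have h := key fun y => (y - c - 1) / (d : ℤ)
    have hd0 : (d : ℤ) ≠ 0 := by omega
    have e : (x + d - c - 1) / (d : ℤ) = (x - c - 1) / (d : ℤ) + 1 := by
      have e' : x + d - c - 1 = x - c - 1 + (d : ℤ) := by ring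
      rw [e', Int.add_ediv_of_dvd_right (dvd_refl _), Int.ediv_self hd0]
    simp only [e] at h
    have b := ncard_boxes hd hN s c
    have b' := ncard_boxes hd hN' s c
    omega
end
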